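/- arXiv:2102.10924 — 2 statements merged into one kernel-verified Lean document; each statement's English description precedes it below -/
import Mathlib

section
/- Suppose the set {λ ∈ ℝ : ∃ y ∈ X, (y,λ) ∈ D} has no maximum, and suppose there exists a sequence (y_n, λ_n) ∈ D with λ_n → ∞ and λ_n/‖y_n‖ → m for some m > 0. Then Fix(P_S ∘ T) is nonempty and T(Fix(P_S ∘ T)) = Fix(P_S ∘ T) = {z ∈ S : κ(z) = 0}. -/
/-!
Normalising the given points of `D` to height `1` gives `(y_n/λ_n, 1)`, a bounded sequence on which
`κ ≤ 1/λ_n → 0`. A limit point `(x₀, 1)` then satisfies `κ(x₀, 1) = 0` by lower semicontinuity, so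
the zero set of `κ` on `S` is nonempty.

If `κ z = 0`, the polar objective at `z` attains the value `0` only at `z`, so `T z = z`; this
accounts for one inclusion and for the image under `T`.

Conversely let `z = (x, 1)` be fixed, so `T z = (x, t)`. A point different from `T z` whose
objective is no larger than that of `T z` contradicts uniqueness of the minimizer. If `t < 1`, such
a point is `(x, t) + a (x₀, 1)` for small `a > 0`: adding a zero of `κ` does not increase `κ`. If
`t > 1`, it is `(1 - ε)(x, t)`. If `t = 1` and `κ z ≠ 0`, it is `(1 - ε) z`. Only `κ z = 0` is left.
-/

open scoped ENNReal RealInnerProductSpace Pointwise Topology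
open Filter

noncomputable section

variable {X : Type*} [NormedAddCommGroup X] [InnerProductSpace ℝ X] [FiniteDimensional ℝ X]

/-- The point `(x, t)` of the lifted space `E = X ×₂ ℝ` (Euclidean product). -/
def pt (x : X) (t : ℝ) : WithLp 2 (X × ℝ) := (WithLp.equiv 2 (X × ℝ)).symm (x, t)

/-- First (`X`-) coordinate of a point of the lifted space. -/
def fstE (z : WithLp 2 (X × ℝ)) : X := (WithLp.equiv 2 (X × ℝ) z).1

/-- Second (`ℝ`-) coordinate of a point of the lifted space. -/
def sndE (z : WithLp 2 (X × ℝ)) : ℝ := (WithLp.equiv 2 (X × ℝ) z).2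

/-- Orthogonal projection `P_S` onto the affine subspace `S = X × {1}`. -/
def PS (z : WithLp 2 (X × ℝ)) : WithLp 2 (X × ℝ) := pt (fstE z) 1

/-- A closed gauge: a convex, lower semicontinuous, positively homogeneous
function `κ : E → [0,∞]` on the lifted space. -/
def IsClosedGauge (κ : WithLp 2 (X × ℝ) → ℝ≥0∞) : Prop :=
  LowerSemicontinuous κ ∧
  (∀ z w : WithLp 2 (X × ℝ), ∀ a b : ℝ, 0 ≤ a → 0 ≤ b → a + b = 1 →
    κ (a • z + b • w) ≤ ENNReal.ofReal a * κ z + ENNReal.ofReal b * κ w) ∧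
  (∀ t : ℝ, 0 ≤ t → ∀ z, κ (t • z) = ENNReal.ofReal t * κ z)

/-- The objective `u ↦ max {κ(u), ‖z − u‖}` defining the polar proximal map. -/
def polarObj (κ : WithLp 2 (X × ℝ) → ℝ≥0∞) (z u : WithLp 2 (X × ℝ)) : ℝ≥0∞ :=
  max (κ u) (ENNReal.ofReal ‖z - u‖)

/-- `T` is the polar proximal map of `κ`: for every `z`, `T z` is the unique
minimizer of `u ↦ max {κ(u), ‖z − u‖}`. -/
def IsPolarProx (κ : WithLp 2 (X × ℝ) → ℝ≥0∞)
    (T : WithLp 2 (X × ℝ) → WithLp 2 (X × ℝ)) : Prop :=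
  ∀ z, (∀ u, polarObj κ z (T z) ≤ polarObj κ z u) ∧
    (∀ u, (∀ v, polarObj κ z u ≤ polarObj κ z v) → u = T z)

lemma pt_fstE_sndE (z : WithLp 2 (X × ℝ)) : pt (fstE z) (sndE z) = z := rfl

lemma sndE_pt (x : X) (t : ℝ) : sndE (pt x t) = t := rfl

lemma smul_pt (a : ℝ) (x : X) (t : ℝ) : a • pt x t = pt (a • x) (a * t) := rfl

lemma add_pt (x x' : X) (t t' : ℝ) : pt x t + pt x' t' = pt (x + x') (t + t') := rfl

lemma sub_pt (x x' : X) (t t' : ℝ) : pt x t - pt x' t' = pt (x - x') (t - t') := rfl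

lemma norm_pt_sq (x : X) (t : ℝ) : ‖pt x t‖ ^ 2 = ‖x‖ ^ 2 + t ^ 2 := by
  have h := WithLp.prod_norm_sq_eq_of_L2 (pt x t)
  rw [h, Real.norm_eq_abs, sq_abs]
  rfl

lemma continuous_pt_one : Continuous fun x : X => pt x 1 :=
  (WithLp.prod_continuous_toLp 2 X ℝ).comp (continuous_id.prodMk continuous_const)

/-- A zero of a closed gauge is a recession direction: moving along it does not increase `κ`. -/
lemma IsClosedGauge.add_smul_le {κ : WithLp 2 (X × ℝ) → ℝ≥0∞} (hκ : IsClosedGauge κ)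
    {s : WithLp 2 (X × ℝ)} (hs : κ s = 0) (w : WithLp 2 (X × ℝ)) {a : ℝ} (ha : 0 ≤ a) :
    κ (w + a • s) ≤ κ w := by
  obtain ⟨-, hconv, hhom⟩ := hκ
  -- `w + a • s` is the midpoint of `2 • w` and `2a • s`.
  have h := hconv ((2 : ℝ) • w) ((2 * a) • s) (1 / 2) (1 / 2) (by norm_num) (by norm_num)
    (by norm_num)
  rw [hhom 2 (by norm_num), hhom (2 * a) (by positivity), hs, mul_zero, mul_zero, add_zero,
    ← mul_assoc, ← ENNReal.ofReal_mul (by norm_num), smul_smul, smul_smul] at h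
  have e : (1 / 2 : ℝ) * (2 * a) = a := by ring
  rw [e] at h
  norm_num at h
  exact h

lemma IsClosedGauge.smul_le {κ : WithLp 2 (X × ℝ) → ℝ≥0∞} (hκ : IsClosedGauge κ)
    (w : WithLp 2 (X × ℝ)) {c : ℝ} (hc : 0 ≤ c) (hc1 : c ≤ 1) : κ (c • w) ≤ κ w := by
  rw [hκ.2.2 c hc]
  calc ENNReal.ofReal c * κ w ≤ 1 * κ w := by
        gcongr
        exact ENNReal.ofReal_le_one.2 hc1
    _ = κ w := one_mul _

/-- A point at least as good as `T z` for the polar objective is `T z` itself. -/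
lemma IsPolarProx.eq_of_le {κ : WithLp 2 (X × ℝ) → ℝ≥0∞} {T : WithLp 2 (X × ℝ) → WithLp 2 (X × ℝ)}
    (hT : IsPolarProx κ T) {z u : WithLp 2 (X × ℝ)}
    (h : polarObj κ z u ≤ polarObj κ z (T z)) : u = T z :=
  (hT z).2 u fun v => h.trans ((hT z).1 v)

lemma IsPolarProx.apply_eq_self {κ : WithLp 2 (X × ℝ) → ℝ≥0∞}
    {T : WithLp 2 (X × ℝ) → WithLp 2 (X × ℝ)} (hT : IsPolarProx κ T) {z : WithLp 2 (X × ℝ)}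
    (h : κ z = 0) : T z = z :=
  (hT.eq_of_le (by simp [polarObj, h])).symm

/-- The vertical coordinate of `T z` is at least `1` when `P_S (T z) = z` and `κ` vanishes somewhere
on `S`: otherwise `T z` could be moved up along a zero of `κ`. -/
lemma one_le_of_fixed {κ : WithLp 2 (X × ℝ) → ℝ≥0∞} (hκ : IsClosedGauge κ)
    {T : WithLp 2 (X × ℝ) → WithLp 2 (X × ℝ)} (hT : IsPolarProx κ T) {x₀ : X}
    (h₀ : κ (pt x₀ 1) = 0) {x : X} {t : ℝ} (hTz : T (pt x 1) = pt x t) : 1 ≤ t := by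
  by_contra! ht
  -- `a` minimizes `a² ‖x₀‖² + (1 - t - a)²`, the squared distance from `z` to the moved point.
  set a : ℝ := (1 - t) / (‖x₀‖ ^ 2 + 1) with ha
  have ha0 : 0 < a := div_pos (by linarith) (by positivity)
  have hmul : a * (‖x₀‖ ^ 2 + 1) = 1 - t := div_mul_cancel₀ _ (by positivity)
  have hle : polarObj κ (pt x 1) (pt x t + a • pt x₀ 1) ≤ polarObj κ (pt x 1) (T (pt x 1)) := by
    rw [hTz]
    refine max_le_max (hκ.add_smul_le h₀ _ ha0.le) (ENNReal.ofReal_le_ofReal ?_)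
    rw [← sq_le_sq₀ (norm_nonneg _) (norm_nonneg _)]
    rw [smul_pt, add_pt, sub_pt, sub_pt, norm_pt_sq, norm_pt_sq, sub_self, sub_add_cancel_left,
      norm_neg, norm_smul, Real.norm_of_nonneg ha0.le, norm_zero]
    have e : a * (a * (‖x₀‖ ^ 2 + 1)) = a * (1 - t) := by rw [hmul]
    nlinarith [mul_pos ha0 (sub_pos.2 ht)]
  have h := hT.eq_of_le hle
  rw [hTz] at h
  have h2 := congrArg sndE h
  rw [smul_pt, add_pt, sndE_pt, sndE_pt] at h2
  linarith

/-- When `T z` has positive height, `(1 - ε) • T z` differs from `T z`, so by uniqueness of the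
minimizer shrinking `T z` strictly worsens the objective. -/
lemma not_shrink_le {κ : WithLp 2 (X × ℝ) → ℝ≥0∞} {T : WithLp 2 (X × ℝ) → WithLp 2 (X × ℝ)}
    (hT : IsPolarProx κ T) {z : WithLp 2 (X × ℝ)} {x : X} {t ε : ℝ} (ht : 0 < t) (hε : 0 < ε)
    (hTz : T z = pt x t) : ¬ polarObj κ z ((1 - ε) • pt x t) ≤ polarObj κ z (pt x t) := by
  intro hle
  have h := hT.eq_of_le (hTz ▸ hle)
  rw [hTz] at h
  have h2 := congrArg sndE h
  rw [smul_pt, sndE_pt, sndE_pt] at h2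
  nlinarith [mul_pos hε ht]

/-- Above height `1`, shrinking `T z` towards the origin would increase neither `κ` nor the distance
to `z`. -/
lemma le_one_of_fixed {κ : WithLp 2 (X × ℝ) → ℝ≥0∞} (hκ : IsClosedGauge κ)
    {T : WithLp 2 (X × ℝ) → WithLp 2 (X × ℝ)} (hT : IsPolarProx κ T)
    {x : X} {t : ℝ} (hTz : T (pt x 1) = pt x t) : t ≤ 1 := by
  by_contra! ht
  have ht0 : 0 < t := by linarith
  -- `ε` minimizes `ε² ‖x‖² + (t - 1 - ε t)²`, the squared distance from `z` to `(1 - ε) • T z`.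
  set ε : ℝ := t * (t - 1) / (‖x‖ ^ 2 + t ^ 2) with hε
  have hd : 0 < ‖x‖ ^ 2 + t ^ 2 := by positivity
  have hε0 : 0 < ε := div_pos (mul_pos ht0 (by linarith)) hd
  have hε1 : ε ≤ 1 := by
    rw [hε, div_le_one hd]
    nlinarith [sq_nonneg ‖x‖]
  have hmul : ε * (‖x‖ ^ 2 + t ^ 2) = t * (t - 1) := div_mul_cancel₀ _ hd.ne'
  refine not_shrink_le hT ht0 hε0 hTz ?_
  refine max_le_max (hκ.smul_le _ (by linarith) (by linarith)) (ENNReal.ofReal_le_ofReal ?_)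
  rw [← sq_le_sq₀ (norm_nonneg _) (norm_nonneg _)]
  have ex : x - (1 - ε) • x = ε • x := by
    rw [sub_smul, one_smul, sub_sub_cancel]
  rw [smul_pt, sub_pt, sub_pt, norm_pt_sq, norm_pt_sq, sub_self, ex, norm_smul,
    Real.norm_of_nonneg hε0.le, norm_zero]
  have e : ε * (ε * (‖x‖ ^ 2 + t ^ 2)) = ε * (t * (t - 1)) := by rw [hmul]
  nlinarith [mul_pos hε0 (mul_pos ht0 (sub_pos.2 ht))]

lemma zero_of_fixed {κ : WithLp 2 (X × ℝ) → ℝ≥0∞} (hκ : IsClosedGauge κ)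
    {T : WithLp 2 (X × ℝ) → WithLp 2 (X × ℝ)} (hT : IsPolarProx κ T)
    {x : X} (hTz : T (pt x 1) = pt x 1) : κ (pt x 1) = 0 := by
  by_contra hne
  obtain ⟨c, hc0, hc⟩ := ENNReal.lt_iff_exists_real_btwn.1 (pos_iff_ne_zero.2 hne)
  obtain ⟨hcpos, hc⟩ := hc
  have hc' : 0 < c := ENNReal.ofReal_pos.1 hcpos
  -- `ε ‖z‖ ≤ c < κ z`, so the distance term does not exceed the objective at `T z = z`.
  set ε : ℝ := min 1 (c / (‖pt x 1‖ + 1)) with hε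
  have hn : 0 ≤ ‖pt x 1‖ := norm_nonneg _
  have hε0 : 0 < ε := lt_min one_pos (by positivity)
  have hε1 : ε ≤ 1 := min_le_left _ _
  have hεc : ε * (‖pt x 1‖ + 1) ≤ c := (le_div_iff₀ (by positivity)).1 (min_le_right _ _)
  refine not_shrink_le hT one_pos hε0 hTz ?_
  refine (max_le (hκ.smul_le _ (by linarith) (by linarith)) ?_).trans (le_max_left _ _)
  refine (ENNReal.ofReal_le_ofReal ?_).trans hc.le
  rw [sub_smul, one_smul, sub_sub_cancel, norm_smul, Real.norm_of_nonneg hε0.le]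
  linarith

/-- Rescaled to height `1`, the given sequence in `D` stays bounded because `m ≠ 0`; each of its limit
points is a zero of `κ`. -/
lemma exists_zero {κ : WithLp 2 (X × ℝ) → ℝ≥0∞} (hκ : IsClosedGauge κ)
    (y : ℕ → X) (lam : ℕ → ℝ) (hmem : ∀ n, κ (pt (y n) (lam n)) ≤ 1)
    (hlamtop : Tendsto lam atTop atTop) (m : ℝ) (hm : 0 < m)
    (hratio : Tendsto (fun n => lam n / ‖y n‖) atTop (𝓝 m)) : ∃ x₀ : X, κ (pt x₀ 1) = 0 := by
  have hnorm : Tendsto (fun n => ‖(lam n)⁻¹ • y n‖) atTop (𝓝 |m|⁻¹) := by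
    refine (hratio.abs.inv₀ (abs_pos.2 hm.ne').ne').congr fun n => ?_
    rw [norm_smul, abs_div, inv_div, norm_inv, Real.norm_eq_abs, abs_norm, div_eq_inv_mul]
  obtain ⟨C, hC⟩ := hnorm.bddAbove_range
  obtain ⟨x₀, -, φ, hφ, hlim⟩ := (isCompact_closedBall (0 : X) C).tendsto_subseq
    (x := fun n => (lam n)⁻¹ • y n)
    fun n => mem_closedBall_zero_iff.2 (hC (Set.mem_range_self n))
  refine ⟨x₀, ?_⟩
  by_contra hne
  obtain ⟨c, hc0, hc⟩ := exists_between (pos_iff_ne_zero.2 hne)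
  have hbig := ((continuous_pt_one.tendsto x₀).comp hlim).eventually (hκ.1 _ c hc)
  have hlam := hlamtop.comp hφ.tendsto_atTop
  have hsmall : Tendsto (fun n => ENNReal.ofReal (lam (φ n))⁻¹) atTop (𝓝 0) := by
    have := ENNReal.tendsto_ofReal (tendsto_inv_atTop_zero.comp hlam)
    rwa [ENNReal.ofReal_zero] at this
  obtain ⟨n, h1, h2, h3⟩ :=
    (hbig.and ((hsmall.eventually (gt_mem_nhds hc0)).and (hlam.eventually_gt_atTop 0))).exists
  have h3' : 0 < lam (φ n) := h3
  refine lt_asymm (h1.trans_le ?_) h2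
  have e : pt ((lam (φ n))⁻¹ • y (φ n)) 1 = (lam (φ n))⁻¹ • pt (y (φ n)) (lam (φ n)) := by
    rw [smul_pt, inv_mul_cancel₀ h3'.ne']
  change κ (pt ((lam (φ n))⁻¹ • y (φ n)) 1) ≤ _
  rw [e, hκ.2.2 _ (inv_nonneg.2 h3'.le)]
  exact mul_le_of_le_one_right' (hmem _)

/-- If `{λ : ∃ y, (y,λ) ∈ D}` has no maximum and there is a
sequence `(y_n,λ_n) ∈ D` with `λ_n → ∞` and `λ_n/‖y_n‖ → m > 0`, then
`Fix (P_S ∘ T)` is nonempty and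
`T '' Fix (P_S ∘ T) = Fix (P_S ∘ T) = {z ∈ S : κ(z) = 0}`. -/
theorem GP4A_fixedPoints_zeroSet
    (κ : WithLp 2 (X × ℝ) → ℝ≥0∞) (hκ : IsClosedGauge κ)
    (T : WithLp 2 (X × ℝ) → WithLp 2 (X × ℝ)) (hT : IsPolarProx κ T)
    (hno : ¬ ∃ lam' : ℝ, IsGreatest {lam : ℝ | ∃ y : X, κ (pt y lam) ≤ 1} lam')
    (y : ℕ → X) (lam : ℕ → ℝ) (hmem : ∀ n, κ (pt (y n) (lam n)) ≤ 1)
    (hlamtop : Tendsto lam atTop atTop)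
    (m : ℝ) (hm : 0 < m)
    (hratio : Tendsto (fun n => lam n / ‖y n‖) atTop (𝓝 m)) :
    Set.Nonempty {z : WithLp 2 (X × ℝ) | PS (T z) = z} ∧
    T '' {z : WithLp 2 (X × ℝ) | PS (T z) = z} = {z : WithLp 2 (X × ℝ) | PS (T z) = z} ∧
    {z : WithLp 2 (X × ℝ) | PS (T z) = z} =
      {z : WithLp 2 (X × ℝ) | sndE z = 1 ∧ κ z = 0} := by
  obtain ⟨x₀, h₀⟩ := exists_zero hκ y lam hmem hlamtop m hm hratio
  have key : {z : WithLp 2 (X × ℝ) | PS (T z) = z} =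
      {z : WithLp 2 (X × ℝ) | sndE z = 1 ∧ κ z = 0} := by
    ext z
    simp only [Set.mem_ofPred_eq]
    constructor
    · intro hz
      have hs : sndE z = 1 := by rw [← hz]; rfl
      have hf : fstE (T z) = fstE z := by
        conv_rhs => rw [← hz]
        rfl
      have ez : pt (fstE z) 1 = z := by rw [← hs, pt_fstE_sndE]
      have hTz : T (pt (fstE z) 1) = pt (fstE z) (sndE (T z)) := by
        rw [ez, ← hf, pt_fstE_sndE]
      have ht : sndE (T z) = 1 := le_antisymm (le_one_of_fixed hκ hT hTz)
        (one_le_of_fixed hκ hT h₀ hTz)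
      rw [ht] at hTz
      exact ⟨hs, ez ▸ zero_of_fixed hκ hT hTz⟩
    · rintro ⟨hs, hz⟩
      rw [hT.apply_eq_self hz, PS, ← hs, pt_fstE_sndE]
  refine ⟨?_, ?_, key⟩
  · rw [key]
    exact ⟨pt x₀ 1, sndE_pt _ _, h₀⟩
  · have hid : ∀ z ∈ {z : WithLp 2 (X × ℝ) | PS (T z) = z}, T z = z := by
      rw [key]
      exact fun z hz => hT.apply_eq_self hz.2
    exact (Set.image_congr hid).trans (Set.image_id' _)
end
end

section
/- Let f : X → [0,∞] be proper, convex, and lower semicontinuous with inf f = 0 and argmin f ≠ ∅, and let κ = f^π be its closed perspective transform. Let γ ∈ [0,1), y₀ ∈ X, and define (y_{n+1},1) = (1−γ)·P_S(T(y_n,1)) + γ·(y_n,1). Then (y_n) converges to some y ∈ argmin f (so f(y) = 0); moreover (y,1) ∈ Fix(P_S ∘ T) and T(y,1) = (y,1). -/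
/-!
Write `u = T z`. Minimality of `u` gives two facts.

* `kappa_polarProx_le`: `κ u ≤ ‖z - u‖`, since otherwise shrinking `u` to `s • u` with `s < 1` close
  to `1` would strictly decrease the objective.
* `inner_polarProx_nonpos`: `⟪z - u, w - u⟫ ≤ 0` whenever `κ w = 0`, since otherwise a small step
  from `u` towards `w` would give a second minimizer.

Let `z = (y, 1)` and `u = (x, lam)`. For a minimizer `p` of `f`, the point `w = (p, 1)` satisfies
`κ w = 0`, and the second fact becomes `⟪y - x, p - x⟫ + (1 - lam) ^ 2 ≤ 0`. Hence a step of the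
iteration decreases `‖y - p‖ ^ 2` by at least `(1 - γ) * ‖z - u‖ ^ 2` (`fejer_step`). So the iterates
are Fejér monotone with respect to `argmin f` and `‖z_n - u_n‖ → 0`. At a cluster point `q`, the
first fact and lower semicontinuity of `κ` give `f q = κ (q, 1) = 0`, and Fejér monotonicity with
respect to `q` itself upgrades subsequential convergence to convergence. Finally `(q, 1)` has
objective value `0`, so it is a fixed point of `T`.
-/

open scoped ENNReal RealInnerProductSpace Pointwise Topology
open Filter

noncomputable section

variable {X : Type*} [NormedAddCommGroup X] [InnerProductSpace ℝ X] [FiniteDimensional ℝ X]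

/-- At a minimizer of the polar proximal objective, the distance term dominates the gauge term. -/
lemma kappa_polarProx_le {κ : WithLp 2 (X × ℝ) → ℝ≥0∞} (hκ : IsClosedGauge κ)
    {T : WithLp 2 (X × ℝ) → WithLp 2 (X × ℝ)} (hT : IsPolarProx κ T) (z : WithLp 2 (X × ℝ)) :
    κ (T z) ≤ ENNReal.ofReal ‖z - T z‖ := by
  obtain ⟨-, -, hhom⟩ := hκ
  have hmin := (hT z).1
  set u := T z with hu
  by_contra! h
  have h0 : κ 0 = 0 := by simpa using hhom 0 le_rfl 0
  have hfin : κ u ≠ ⊤ := by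
    have h1 : κ u ≤ ENNReal.ofReal ‖z‖ := by
      refine (le_max_left _ _).trans ((hmin 0).trans ?_)
      simp [polarObj, h0]
    exact ne_top_of_le_ne_top ENNReal.ofReal_ne_top h1
  have hpos : κ u ≠ 0 := (pos_of_gt h).ne'
  have hk : ‖z - u‖ < (κ u).toReal := (ENNReal.ofReal_lt_iff_lt_toReal (norm_nonneg _) hfin).1 h
  have hcont : Continuous fun s : ℝ => ‖z - s • u‖ := by fun_prop
  have hev : ∀ᶠ s : ℝ in 𝓝[<] 1, ‖z - s • u‖ < (κ u).toReal :=
    nhdsWithin_le_nhds (hcont.continuousAt.eventually_lt continuousAt_const (by simpa using hk))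
  have hev2 : ∀ᶠ s : ℝ in 𝓝[<] 1, s ∈ Set.Ioo (0 : ℝ) 1 := Ioo_mem_nhdsLT one_pos
  obtain ⟨s, hs, hs0, hs1⟩ := (hev.and hev2).exists
  have hlt : polarObj κ z (s • u) < κ u := by
    refine max_lt ?_ ((ENNReal.ofReal_lt_iff_lt_toReal (norm_nonneg _) hfin).2 hs)
    rw [hhom s hs0.le]
    have : ENNReal.ofReal s < 1 := by simpa using hs1
    calc ENNReal.ofReal s * κ u < 1 * κ u := ENNReal.mul_lt_mul_left hpos hfin this
      _ = κ u := one_mul _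
  exact absurd ((le_max_left _ _).trans (hmin (s • u))) (not_le.2 hlt)

/-- The variational inequality satisfied by `T z` against zeros of the gauge. -/
lemma inner_polarProx_nonpos {κ : WithLp 2 (X × ℝ) → ℝ≥0∞} (hκ : IsClosedGauge κ)
    {T : WithLp 2 (X × ℝ) → WithLp 2 (X × ℝ)} (hT : IsPolarProx κ T) (z w : WithLp 2 (X × ℝ))
    (hw : κ w = 0) : ⟪z - T z, w - T z⟫ ≤ 0 := by
  obtain ⟨-, hconv, -⟩ := hκ
  obtain ⟨hmin, huniq⟩ := hT z
  set u := T z with hu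
  by_contra! h
  set d := w - u with hd
  have hd0 : d ≠ 0 := by
    rintro h0
    simp [h0] at h
  have hdpos : 0 < ‖d‖ ^ 2 := by positivity
  -- The exact line-search step along `d`, truncated so as not to overshoot `w`.
  obtain ⟨s, hs0, hs1, hsd⟩ : ∃ s : ℝ, 0 < s ∧ s ≤ 1 ∧ s * ‖d‖ ^ 2 ≤ ⟪z - u, d⟫ :=
    ⟨min 1 (⟪z - u, d⟫ / ‖d‖ ^ 2), lt_min one_pos (div_pos h hdpos), min_le_left _ _,
      (le_div_iff₀ hdpos).1 (min_le_right _ _)⟩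
  have hv : u + s • d = (1 - s) • u + s • w := by
    rw [hd]; module
  have hκv : κ (u + s • d) ≤ κ u := by
    rw [hv]
    refine (hconv u w (1 - s) s (by linarith) hs0.le (by ring)).trans ?_
    rw [hw, mul_zero, add_zero]
    exact mul_le_of_le_one_left bot_le (by simpa using hs0.le)
  have hnorm : ‖z - (u + s • d)‖ ≤ ‖z - u‖ := by
    refine le_of_sq_le_sq ?_ (norm_nonneg _)
    rw [← sub_sub, norm_sub_sq_real, inner_smul_right, norm_smul, mul_pow, Real.norm_eq_abs, sq_abs]
    nlinarith
  have heq : u + s • d = u := huniq _ fun v =>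
    (max_le_max hκv (ENNReal.ofReal_le_ofReal hnorm)).trans (hmin v)
  have : s • d = 0 := by simpa using heq
  rcases smul_eq_zero.1 this with h1 | h1
  · exact hs0.ne' h1
  · exact hd0 h1

lemma pt_sub_inner (a b c d : X) (r s t v : ℝ) :
    ⟪pt a r - pt b s, pt c t - pt d v⟫ = ⟪a - b, c - d⟫ + (r - s) * (t - v) := by
  simp [pt, WithLp.prod_inner_apply, mul_comm]

/-- If `pt x lam` satisfies the variational inequality against `pt p 1`, a relaxed step towards `x`
decreases the squared distance to `p` by a multiple of the squared residual. -/
lemma fejer_step {γ : ℝ} (hγ0 : 0 ≤ γ) (hγ1 : γ < 1) (y x p : X) (lam : ℝ)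
    (h : ⟪pt y 1 - pt x lam, pt p 1 - pt x lam⟫ ≤ 0) :
    ‖(1 - γ) • x + γ • y - p‖ ^ 2 + (1 - γ) * ‖pt y 1 - pt x lam‖ ^ 2 ≤ ‖y - p‖ ^ 2 := by
  rw [pt_sub_inner] at h
  rw [← real_inner_self_eq_norm_sq (pt y 1 - pt x lam), pt_sub_inner, real_inner_self_eq_norm_sq]
  have e1 : (1 - γ) • x + γ • y - p = (y - p) - (1 - γ) • (y - x) := by module
  have e2 : p - x = (y - x) - (y - p) := by abel
  rw [e2, inner_sub_right, real_inner_self_eq_norm_sq] at h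
  rw [e1, norm_sub_sq_real, inner_smul_right, norm_smul, mul_pow, Real.norm_eq_abs, sq_abs,
    real_inner_comm]
  have hg : 0 ≤ 1 - γ := by linarith
  have h1 := mul_nonneg hg (sub_nonneg.2 h)
  have h2 := mul_nonneg hg (sq_nonneg (1 - lam))
  have h3 := mul_nonneg (mul_nonneg hg hγ0) (sq_nonneg ‖y - x‖)
  nlinarith

/-- For `f` proper convex lsc with `inf f = 0` and
`argmin f ≠ ∅`, `κ = f^π`, `γ ∈ [0,1)`: the `P⁴A` iteration
`(y_{n+1},1) = (1−γ) P_S(T(y_n,1)) + γ (y_n,1)` satisfies `y_n → y ∈ argmin f`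
(so `f(y) = 0`), with `(y,1) ∈ Fix (P_S ∘ T)` and `T(y,1) = (y,1)`. -/
theorem P4A_global_convergence_zeroInf
    (f : X → ℝ≥0∞)
    (hfproper : ∃ x, f x ≠ ⊤)
    (hfconv : ∀ x y : X, ∀ a b : ℝ, 0 ≤ a → 0 ≤ b → a + b = 1 →
      f (a • x + b • y) ≤ ENNReal.ofReal a * f x + ENNReal.ofReal b * f y)
    (hflsc : LowerSemicontinuous f)
    (hinf : (⨅ x, f x) = 0)
    (hargmin : ∃ x : X, ∀ w, f x ≤ f w)
    (κ : WithLp 2 (X × ℝ) → ℝ≥0∞) (hκ : IsClosedGauge κ)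
    (hκpos : ∀ (x : X) (lam : ℝ), 0 < lam →
      κ (pt x lam) = ENNReal.ofReal lam * f (lam⁻¹ • x))
    (hκneg : ∀ (x : X) (lam : ℝ), lam < 0 → κ (pt x lam) = ⊤)
    (T : WithLp 2 (X × ℝ) → WithLp 2 (X × ℝ)) (hT : IsPolarProx κ T)
    (γ : ℝ) (hγ0 : 0 ≤ γ) (hγ1 : γ < 1)
    (y : ℕ → X)
    (hrec : ∀ n, pt (y (n + 1)) 1 = (1 - γ) • PS (T (pt (y n) 1)) + γ • pt (y n) 1) :
    ∃ ylim : X,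
      Tendsto y atTop (𝓝 ylim) ∧
      (∀ w, f ylim ≤ f w) ∧
      f ylim = 0 ∧
      PS (T (pt ylim 1)) = pt ylim 1 ∧
      T (pt ylim 1) = pt ylim 1 := by
  have hκ1 : ∀ x, κ (pt x 1) = f x := fun x => by simpa using hκpos x 1 one_pos
  have hT0 : ∀ x, f x = 0 → T (pt x 1) = pt x 1 := fun x hx =>
    ((hT _).2 _ fun v => by simp [polarObj, hκ1, hx]).symm
  have hptc : Continuous fun x : X => pt x 1 :=
    (WithLp.prod_continuous_toLp 2 X ℝ).comp (by fun_prop)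
  set x : ℕ → X := fun n => fstE (T (pt (y n) 1))
  set lam : ℕ → ℝ := fun n => sndE (T (pt (y n) 1))
  have hu : ∀ n, T (pt (y n) 1) = pt (x n) (lam n) := fun n => rfl
  have hy : ∀ n, y (n + 1) = (1 - γ) • x n + γ • y n := fun n => by
    have := congrArg fstE (hrec n)
    simpa [fstE, pt, PS, x] using this
  set e : ℕ → ℝ := fun n => ‖pt (y n) 1 - T (pt (y n) 1)‖ with he
  have hstep : ∀ p, f p = 0 → ∀ n,
      ‖y (n + 1) - p‖ ^ 2 + (1 - γ) * e n ^ 2 ≤ ‖y n - p‖ ^ 2 := fun p hp n => by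
    have h := inner_polarProx_nonpos hκ hT (pt (y n) 1) (pt p 1) ((hκ1 p).trans hp)
    rw [hu] at h
    have := fejer_step hγ0 hγ1 _ _ _ _ h
    rwa [← hy, ← hu] at this
  have hg : 0 < 1 - γ := by linarith
  have hanti : ∀ p, f p = 0 → Antitone fun n => ‖y n - p‖ := fun p hp =>
    antitone_nat_of_succ_le fun n => le_of_sq_le_sq
      (by nlinarith [hstep p hp n, mul_nonneg hg.le (sq_nonneg (e n))]) (norm_nonneg _)
  obtain ⟨p, hp⟩ := hargmin
  have hp0 : f p = 0 := le_antisymm (hinf ▸ le_iInf hp) bot_le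
  -- The residuals vanish because their squares are bounded by a telescoping difference.
  have hconv := tendsto_atTop_ciInf (hanti p hp0) ⟨0, by rintro _ ⟨n, rfl⟩; exact norm_nonneg _⟩
  set L := ⨅ n, ‖y n - p‖
  have hdiff : Tendsto (fun n => (‖y n - p‖ ^ 2 - ‖y (n + 1) - p‖ ^ 2) / (1 - γ)) atTop (𝓝 0) := by
    simpa using ((hconv.pow 2).sub (((tendsto_add_atTop_iff_nat 1).2 hconv).pow 2)).div_const (1 - γ)
  have he2 : Tendsto (fun n => e n ^ 2) atTop (𝓝 0) :=
    squeeze_zero (fun n => sq_nonneg _)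
      (fun n => (le_div_iff₀ hg).2 (by linarith [hstep p hp0 n])) hdiff
  have he0 : Tendsto e atTop (𝓝 0) := by
    have := he2.sqrt
    simpa [Real.sqrt_sq, he] using this
  have hbdd : ∀ n, y n ∈ Metric.closedBall p ‖y 0 - p‖ := fun n => by
    rw [mem_closedBall_iff_norm]
    exact hanti p hp0 (Nat.zero_le n)
  obtain ⟨q, -, φ, hφ, hq⟩ := tendsto_subseq_of_bounded Metric.isBounded_closedBall hbdd
  have heφ : Tendsto (fun n => e (φ n)) atTop (𝓝 0) := he0.comp hφ.tendsto_atTop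
  have hz : Tendsto (fun n => pt (y (φ n)) 1) atTop (𝓝 (pt q 1)) :=
    (hptc.tendsto q).comp hq
  have hTz : Tendsto (fun n => T (pt (y (φ n)) 1)) atTop (𝓝 (pt q 1)) := by
    simpa using hz.sub (tendsto_zero_iff_norm_tendsto_zero.2 heφ)
  have hq0 : f q = 0 := by
    by_contra hne
    obtain ⟨c, hc0, hc⟩ := exists_between (pos_iff_ne_zero.2 hne)
    have h1 : ∀ᶠ n in atTop, c < κ (T (pt (y (φ n)) 1)) :=
      hTz.eventually (hκ.1 (pt q 1) c (by simpa [hκ1] using hc))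
    have h2 : ∀ᶠ n in atTop, ENNReal.ofReal (e (φ n)) < c := by
      refine Tendsto.eventually_lt_const hc0 ?_
      simpa using ENNReal.tendsto_ofReal heφ
    obtain ⟨n, hn1, hn2⟩ := (h1.and h2).exists
    exact absurd (hn1.trans_le (kappa_polarProx_le hκ hT _)) (not_lt.2 hn2.le)
  refine ⟨q, ?_, fun w => by simp [hq0], hq0, by rw [hT0 q hq0]; rfl, hT0 q hq0⟩
  rw [tendsto_iff_norm_sub_tendsto_zero]
  exact (tendsto_iff_tendsto_subseq_of_antitone (hanti q hq0) hφ.tendsto_atTop).2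
    (tendsto_iff_norm_sub_tendsto_zero.1 hq)
end
end
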